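/- arXiv:math/0311467 — 6 statements merged into one kernel-verified Lean document; each statement's English description precedes it below -/
import Mathlib

section
/- For i ∈ {1,…,n−1} let D_i be the unique ℂ-derivation of B with D_i(x_{rs}) = [r = i+1]·x_{is} − [s = i]·x_{r,i+1}, and let D′_i be the unique ℂ-derivation of B with D′_i(x_{rs}) = [r = i]·x_{i+1,s} − [s = i+1]·x_{ri} (the Poisson brackets with x_{i,i+1} and x_{i+1,i} respectively). Let f ∈ B be the coefficient of t^d in det M(t). Then for every i ∈ {1,…,n−1}, D_i(f) lies in the ideal of B generated by f together with the variables x_{ab} with blk(a) ≤ blk(b); and for every i such that i and i+1 lie in the same block, D′_i(f) also lies in this ideal. (This expresses that {p, f} ⊂ S(m⁻)f + S(g)p for the parabolic subalgebra p.) -/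
open Finset MvPolynomial

noncomputable section

/-- Sum of the first `j` block sizes (blocks are 1-indexed). -/
def blkSum (c : ℕ → ℕ) (j : ℕ) : ℕ := ∑ i ∈ Finset.Icc 1 j, c i

/-- Block index of `a ∈ {1,…,n}`: the least `j` with `a ≤ c 1 + ⋯ + c j`. -/
def blk (c : ℕ → ℕ) (a : ℕ) : ℕ := sInf {j | a ≤ blkSum c j}

/-- The polynomial ring `B = ℂ[x_{ab} : 1 ≤ a, b ≤ n]` in all `n²` variables;
the variable `x_{ab}` (1-indexed) is `X (a-1, b-1)` (0-indexed). -/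
abbrev Bring (n : ℕ) : Type := MvPolynomial (Fin n × Fin n) ℂ

/-- The generic matrix `𝒳` of the nilradical: `(a,b)` entry `x_{ab}` if `blk a > blk b`,
and `0` otherwise. -/
def genXB (c : ℕ → ℕ) (n : ℕ) : Matrix (Fin n) (Fin n) (Bring n) :=
  Matrix.of fun a b =>
    if blk c (b.1 + 1) < blk c (a.1 + 1) then X (a, b) else 0

/-- The matrix `M(t)`: the `(n-c) × (n-c)` submatrix of `𝒳 + t · Id` consisting of
rows `c+1, …, n` and columns `1, …, n-c`, viewed over `B[t]`.  Here `m = n - c`. -/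
def MmatB (c : ℕ → ℕ) (n m : ℕ) (h : m + c 1 = n) :
    Matrix (Fin m) (Fin m) (Polynomial (Bring n)) :=
  Matrix.of fun i j =>
    Polynomial.C (genXB c n (Fin.cast h (i.addNat (c 1)))
        (Fin.castLE (le_trans (Nat.le_add_right m (c 1)) (le_of_eq h)) j))
      + if (Fin.cast h (i.addNat (c 1)) : Fin n)
            = Fin.castLE (le_trans (Nat.le_add_right m (c 1)) (le_of_eq h)) j
        then Polynomial.X else 0
/-- `d := Σᵢ max (cᵢ - c, 0)` (truncated subtraction). -/
def dBS (c : ℕ → ℕ) (l : ℕ) : ℕ := ∑ i ∈ Finset.Icc 1 l, (c i - c 1)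

/-- The Benlolo–Sanderson element: the coefficient of `t^d` in `det M(t)`, in `B`. -/
def BSfB (c : ℕ → ℕ) (l n m : ℕ) (h : m + c 1 = n) : Bring n :=
  ((MmatB c n m h).det).coeff (dBS c l)


lemma der_prod {R A : Type*} [CommRing R] [CommRing A] [Algebra R A] (d : Derivation R A A)
    {ι : Type*} [DecidableEq ι] (s : Finset ι) (f : ι → A) :
    d (∏ i ∈ s, f i) = ∑ i ∈ s, (∏ j ∈ s.erase i, f j) * d (f i) := by
  induction s using Finset.induction_on with
  | empty => simp
  | insert a s ha ih =>
    rw [prod_insert ha, d.leibniz, ih, sum_insert ha, erase_insert ha, smul_eq_mul, smul_eq_mul,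
      mul_sum, add_comm]
    congr 1
    apply sum_congr rfl
    intro i hi
    have hia : a ≠ i := fun h => ha (h ▸ hi)
    rw [erase_insert_of_ne hia, prod_insert (by simp [ha]), mul_assoc]

lemma der_det {R A : Type*} [CommRing R] [CommRing A] [Algebra R A] (d : Derivation R A A)
    {ι : Type*} [Fintype ι] [DecidableEq ι] (M : Matrix ι ι A) :
    d M.det = ∑ i, ∑ r, M.adjugate i r * d (M r i) := by
  have h1 : ∀ i, ∑ r, M.adjugate i r * d (M r i) = (M.updateCol i (fun r => d (M r i))).det := by
    intro i
    rw [← Matrix.cramer_apply, Matrix.cramer_eq_adjugate_mulVec]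
    rfl
  simp_rw [h1, Matrix.det_apply]
  rw [map_sum, sum_comm]
  apply sum_congr rfl
  intro σ _
  have : ∀ (u : ℤˣ) (x : A), d (u • x) = u • d x := by
    intro u x
    rcases Int.units_eq_one_or u with rfl | rfl <;> simp
  rw [this, der_prod, smul_sum]
  apply sum_congr rfl
  intro i _
  congr 1
  rw [← mul_prod_erase _ _ (mem_univ i), mul_comm]
  congr 1
  · simp
  · apply prod_congr rfl
    intro j hj
    rw [Matrix.updateCol_ne (ne_of_mem_erase hj)]

/-- coefficientwise extension -/
def dext {n : ℕ} (D : Derivation ℂ (Bring n) (Bring n)) :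
    Derivation ℂ (Polynomial (Bring n)) (Polynomial (Bring n)) :=
  (PolynomialModule.equivPolynomialSelf (R := Bring n)).toLinearMap.compDer D.mapCoeffs

lemma dext_coeff {n : ℕ} (D : Derivation ℂ (Bring n) (Bring n)) (q : Polynomial (Bring n)) (k : ℕ) :
    (dext D q).coeff k = D (q.coeff k) := rfl

lemma blkSum_mono (c : ℕ → ℕ) : Monotone (blkSum c) := by
  intro a b h
  exact sum_le_sum_of_subset (Icc_subset_Icc le_rfl h)

lemma blkSum_succ (c : ℕ → ℕ) (j : ℕ) : blkSum c (j + 1) = blkSum c j + c (j + 1) := by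
  unfold blkSum
  rw [sum_Icc_succ_top (by omega)]

lemma blk_le_iff (c : ℕ → ℕ) {l a : ℕ} (ha : a ≤ blkSum c l) (j : ℕ) :
    blk c a ≤ j ↔ a ≤ blkSum c j := by
  constructor
  · intro h
    have : a ≤ blkSum c (blk c a) := Nat.sInf_mem (s := {j | a ≤ blkSum c j}) ⟨l, ha⟩
    exact this.trans (blkSum_mono c h)
  · intro h
    exact Nat.sInf_le h

lemma card_fin_filter (m a b : ℕ) (hb : b ≤ m) :
    (univ.filter (fun i : Fin m => a ≤ i.1 ∧ i.1 < b)).card = b - a := by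
  rw [← Nat.card_Ico, ← card_map Fin.valEmbedding]
  congr 1
  ext x
  simp only [mem_map, mem_filter, mem_univ, true_and, Fin.valEmbedding_apply, mem_Ico]
  constructor
  · rintro ⟨i, h, rfl⟩; exact h
  · intro h; exact ⟨⟨x, by omega⟩, h, rfl⟩

lemma count_diag (l : ℕ) (hl : 2 ≤ l) (c : ℕ → ℕ)
    (hcl : c l = c 1) (n : ℕ) (hn : n = blkSum c l)
    (m : ℕ) (hm : m + c 1 = n) (σ : Equiv.Perm (Fin m))
    (hσ : ∀ i, blk c (i.1 + 1) < blk c ((σ i).1 + c 1 + 1) ∨ (σ i).1 + c 1 = i.1) :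
    dBS c l ≤ (univ.filter (fun i => (σ i).1 + c 1 = i.1)).card := by
  set T := univ.filter (fun i => (σ i).1 + c 1 = i.1) with hT
  have hb : ∀ a, a < n → ∀ j, blk c (a + 1) ≤ j ↔ a < blkSum c j := by
    intro a ha j
    rw [blk_le_iff c (l := l) (by omega)]
    omega
  have hs1 : blkSum c 1 = c 1 := by simp [blkSum]
  have hsm : blkSum c (l - 1) = m := by
    have := blkSum_succ c (l - 1)
    rw [show l - 1 + 1 = l by omega] at this
    omega
  have key : ∀ j ∈ Icc 1 l, c j - c 1 ≤ (T.filter (fun i => blk c (i.1 + 1) = j)).card := by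
    intro j hj
    rw [mem_Icc] at hj
    by_cases hj1 : j = 1
    · subst hj1; omega
    by_cases hjl : j = l
    · subst hjl; omega
    obtain ⟨k, rfl⟩ : ∃ k, j = k + 1 := ⟨j - 1, by omega⟩
    have hk1 : c 1 ≤ blkSum c k := hs1 ▸ blkSum_mono c (by omega)
    have hk2 : blkSum c (k + 1) ≤ m := hsm ▸ blkSum_mono c (by omega)
    have hk3 := blkSum_succ c k
    have hbj : ∀ a, a < n → (blk c (a + 1) = k + 1 ↔ blkSum c k ≤ a ∧ a < blkSum c (k + 1)) := by
      intro a ha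
      have h1 := hb a ha k
      have h2 := hb a ha (k + 1)
      omega
    -- A: columns i whose row σ i lies in block j
    let A := univ.filter (fun i : Fin m => blkSum c k ≤ (σ i).1 + c 1 ∧ (σ i).1 + c 1 < blkSum c (k + 1))
    let P := univ.filter (fun i : Fin m => blkSum c k ≤ (σ i).1 + c 1)
    let Q := univ.filter (fun i : Fin m => blkSum c k ≤ i.1)
    have cA : A.card = c (k + 1) := by
      have : A.card = (univ.filter (fun i : Fin m => blkSum c k - c 1 ≤ i.1 ∧ i.1 < blkSum c (k + 1) - c 1)).card := by
        apply card_bij (fun i _ => σ i)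
        · intro i hi
          simp only [A, mem_filter, mem_univ, true_and] at hi ⊢
          omega
        · intro i _ j _ h; exact σ.injective h
        · intro i hi
          simp only [mem_filter, mem_univ, true_and] at hi
          refine ⟨σ.symm i, ?_, by simp⟩
          simp only [A, mem_filter, mem_univ, true_and, Equiv.apply_symm_apply]
          omega
      rw [this, card_fin_filter _ _ _ (by omega)]
      omega
    have cP : P.card = n - blkSum c k := by
      have : P.card = (univ.filter (fun i : Fin m => blkSum c k - c 1 ≤ i.1 ∧ i.1 < m)).card := by
        apply card_bij (fun i _ => σ i)
        · intro i hi
          simp only [P, mem_filter, mem_univ, true_and] at hi ⊢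
          omega
        · intro i _ j _ h; exact σ.injective h
        · intro i hi
          simp only [mem_filter, mem_univ, true_and] at hi
          refine ⟨σ.symm i, ?_, by simp⟩
          simp only [P, mem_filter, mem_univ, true_and, Equiv.apply_symm_apply]
          omega
      rw [this, card_fin_filter _ _ _ (by omega)]
      omega
    have cQ : Q.card = m - blkSum c k := by
      rw [← card_fin_filter m (blkSum c k) m le_rfl]
      congr 1
      ext i
      simp [Q]
    have hQP : Q ⊆ P := by
      intro i hi
      simp only [P, Q, mem_filter, mem_univ, true_and] at hi ⊢
      rcases hσ i with h | h
      · have h1 := hb i.1 (by omega) k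
        have h2 := hb ((σ i).1 + c 1) (by omega) k
        omega
      · omega
    have hA : A ⊆ (T.filter (fun i => blk c (i.1 + 1) = k + 1)) ∪ (P \ Q) := by
      intro i hi
      simp only [A, P, Q, T, mem_filter, mem_univ, true_and, mem_union, mem_sdiff] at hi ⊢
      rw [hbj i.1 (by omega)]
      by_cases hd : (σ i).1 + c 1 = i.1
      · left; omega
      · right
        refine ⟨hi.1, ?_⟩
        have h := (hσ i).resolve_right hd
        have h1 := hb i.1 (by omega) k
        have h2 := (hbj ((σ i).1 + c 1) (by omega)).2 hi
        omega
    have h1 := card_le_card hA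
    have h2 := card_union_le (T.filter (fun i => blk c (i.1 + 1) = k + 1)) (P \ Q)
    have h3 := card_sdiff_add_card_eq_card hQP
    omega
  calc dBS c l ≤ ∑ j ∈ Icc 1 l, (T.filter (fun i => blk c (i.1 + 1) = j)).card := sum_le_sum key
    _ = T.card := by
      symm
      apply card_eq_sum_card_fiberwise
      intro i _
      have h0 := hb i.1 (by omega) 0
      have h1 := hb i.1 (by omega) l
      have h2 : blkSum c 0 = 0 := by simp [blkSum]
      simp only [coe_Icc, Set.mem_Icc]
      omega

lemma X_pow_dvd_det (l : ℕ) (hl : 2 ≤ l) (c : ℕ → ℕ)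
    (hcl : c l = c 1) (n : ℕ) (hn : n = blkSum c l)
    (m : ℕ) (hm : m + c 1 = n) {R : Type*} [CommRing R]
    (N : Matrix (Fin m) (Fin m) (Polynomial R))
    (hN : ∀ r s, blk c (s.1 + 1) < blk c (r.1 + c 1 + 1) ∨
      (r.1 + c 1 = s.1 ∧ Polynomial.X ∣ N r s) ∨ N r s = 0) :
    Polynomial.X ^ dBS c l ∣ N.det := by
  rw [Matrix.det_apply]
  apply dvd_sum
  intro σ _
  have h : Polynomial.X ^ dBS c l ∣ ∏ i, N (σ i) i := by
    by_cases h0 : ∃ i, N (σ i) i = 0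
    · obtain ⟨i, hi⟩ := h0
      rw [prod_eq_zero (f := fun i => N (σ i) i) (mem_univ i) hi]
      exact dvd_zero _
    push Not at h0
    have h1 := count_diag l hl c hcl n hn m hm σ (by
      intro i
      rcases hN (σ i) i with h | h | h
      · exact Or.inl h
      · exact Or.inr h.1
      · exact absurd h (h0 i))
    refine (pow_dvd_pow _ h1).trans ?_
    rw [← prod_const]
    refine (prod_dvd_prod_of_dvd _ (fun i => N (σ i) i) ?_).trans
      (prod_dvd_prod_of_subset _ _ _ (filter_subset _ _))
    intro i hi
    simp only [mem_filter, mem_univ, true_and] at hi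
    rcases hN (σ i) i with h | h | h
    · rw [hi] at h
      exact absurd h (lt_irrefl _)
    · exact h.2
    · exact absurd h (h0 i)
  rcases Int.units_eq_one_or (Equiv.Perm.sign σ) with h' | h' <;> rw [h'] <;> simpa using h

/-- entries of `𝒳 + t` -/
def Yent (c : ℕ → ℕ) (n : ℕ) (a b : Fin n) : Polynomial (Bring n) :=
  Polynomial.C (genXB c n a b) + if a = b then Polynomial.X else 0

lemma Yent_der (c : ℕ → ℕ) (n : ℕ) (D : Derivation ℂ (Bring n) (Bring n)) (u v : Fin n)
    (hD : ∀ r s : Fin n, D (X (r, s)) =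
      (if r = u then X (v, s) else 0) - (if s = v then X (r, u) else 0))
    (huv : blk c (v.1 + 1) ≤ blk c (u.1 + 1)) (a b : Fin n) :
    dext D (Yent c n a b) - ((if a = u then Yent c n v b else 0) - (if b = v then Yent c n a u else 0))
      ∈ Ideal.map (Polynomial.C (R := Bring n)) (Ideal.span {q : Bring n | ∃ a b : Fin n,
              blk c (a.1 + 1) ≤ blk c (b.1 + 1) ∧ q = X (a, b)}) := by
  have h1 : dext D (Yent c n a b) = Polynomial.C (D (genXB c n a b)) := by
    ext1 k
    rw [dext_coeff, Yent, Polynomial.coeff_add, map_add, Polynomial.coeff_C, Polynomial.coeff_C]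
    have : D ((if a = b then (Polynomial.X : Polynomial (Bring n)) else 0).coeff k) = 0 := by
      split_ifs
      · rw [Polynomial.coeff_X]; split_ifs <;> simp
      · simp
    rw [this, add_zero]
    split_ifs <;> simp
  have h2 : ((if a = u then Yent c n v b else 0) - (if b = v then Yent c n a u else 0))
      = Polynomial.C ((if a = u then genXB c n v b else 0) - (if b = v then genXB c n a u else 0)) := by
    unfold Yent
    by_cases ha : a = u <;> by_cases hb : b = v
    · subst ha; subst hb; simp
    · have hb' : ¬ v = b := fun h => hb h.symm
      simp [ha, hb, hb']
    · simp [ha, hb]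
    · simp [ha, hb]
  rw [h1, h2, ← Polynomial.C_sub]
  apply Ideal.mem_map_of_mem
  set I := Ideal.span {q : Bring n | ∃ a b : Fin n,
              blk c (a.1 + 1) ≤ blk c (b.1 + 1) ∧ q = X (a, b)} with hI
  have hX : ∀ a b : Fin n, X (a, b) - genXB c n a b ∈ I := by
    intro a b
    simp only [genXB, Matrix.of_apply]
    split_ifs with h
    · simp
    · rw [sub_zero]
      exact Ideal.subset_span ⟨a, b, not_lt.1 h, rfl⟩
  by_cases hab : blk c (b.1 + 1) < blk c (a.1 + 1)
  · have : genXB c n a b = X (a, b) := by simp [genXB, hab]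
    rw [this, hD]
    have e : ((if a = u then X (v, b) else 0) - (if b = v then X (a, u) else 0) : Bring n)
       - ((if a = u then genXB c n v b else 0) - (if b = v then genXB c n a u else 0))
       = (if a = u then X (v, b) - genXB c n v b else 0) - (if b = v then X (a, u) - genXB c n a u else 0) := by
      split_ifs <;> ring
    rw [e]
    apply I.sub_mem
    · split_ifs
      · exact hX _ _
      · exact I.zero_mem
    · split_ifs
      · exact hX _ _
      · exact I.zero_mem
  · have h0 : genXB c n a b = 0 := by simp [genXB, hab]
    have h3 : (if a = u then genXB c n v b else 0) = 0 := by
      split_ifs with h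
      · subst h
        simp only [genXB, Matrix.of_apply]
        rw [if_neg (by omega)]
      · rfl
    have h4 : (if b = v then genXB c n a u else 0) = 0 := by
      split_ifs with h
      · subst h
        simp only [genXB, Matrix.of_apply]
        rw [if_neg (by omega)]
      · rfl
    rw [h0, h3, h4]
    simp

lemma main_aux (l : ℕ) (hl : 2 ≤ l) (c : ℕ → ℕ)
    (hcl : c l = c 1) (n : ℕ) (hn : n = blkSum c l)
    (m : ℕ) (hm : m + c 1 = n) (D : Derivation ℂ (Bring n) (Bring n)) (u v : Fin n) (hne : u ≠ v)
    (hD : ∀ r s : Fin n, D (X (r, s)) =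
      (if r = u then X (v, s) else 0) - (if s = v then X (r, u) else 0))
    (huv : blk c (v.1 + 1) ≤ blk c (u.1 + 1)) :
    D (BSfB c l n m hm) ∈ Ideal.span {q : Bring n | ∃ a b : Fin n,
              blk c (a.1 + 1) ≤ blk c (b.1 + 1) ∧ q = X (a, b)} := by
  have hb : ∀ a, a < n → ∀ j, blk c (a + 1) ≤ j ↔ a < blkSum c j := by
    intro a ha j
    rw [blk_le_iff c (l := l) (by omega)]
    omega
  have hs0 : blkSum c 0 = 0 := by simp [blkSum]
  have hs1 : blkSum c 1 = c 1 := by simp [blkSum]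
  have hsm : blkSum c (l - 1) = m := by
    have := blkSum_succ c (l - 1)
    rw [show l - 1 + 1 = l by omega] at this
    omega
  let ρ : Fin m → Fin n := fun r => Fin.cast hm (r.addNat (c 1))
  let κ : Fin m → Fin n := Fin.castLE (le_trans (Nat.le_add_right m (c 1)) (le_of_eq hm))
  have hρ : ∀ r, (ρ r).1 = r.1 + c 1 := fun r => rfl
  have hκ : ∀ r, (κ r).1 = r.1 := fun r => rfl
  set M := MmatB c n m hm with hM
  have hMe : ∀ r s, M r s = Yent c n (ρ r) (κ s) := fun r s => rfl
  -- divisibility of adjugate entries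
  have hadj : ∀ s r, blk c ((κ s).1 + 1) < blk c ((ρ r).1 + 1) →
      Polynomial.X ^ dBS c l ∣ M.adjugate s r := by
    intro s r hsr
    rw [Matrix.adjugate_apply]
    apply X_pow_dvd_det l hl c hcl n hn m hm
    intro i j
    by_cases hir : i = r
    · subst hir
      rw [Matrix.updateRow_self]
      by_cases hjs : j = s
      · subst hjs; exact Or.inl hsr
      · right; right; simp [hjs]
    · rw [Matrix.updateRow_ne hir, hMe]
      by_cases hlt : blk c (j.1 + 1) < blk c (i.1 + c 1 + 1)
      · exact Or.inl hlt
      · right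
        have hg : genXB c n (ρ i) (κ j) = 0 := by
          simp only [genXB, Matrix.of_apply]
          exact if_neg hlt
        by_cases he : ρ i = κ j
        · left
          refine ⟨congrArg Fin.val he, ?_⟩
          simp [Yent, hg, he]
          simp [he] at hg
          simp [hg]
        · right
          simp [Yent, hg, he]
  have hS1 : ∀ r, Polynomial.X ^ (dBS c l + 1) ∣
      ∑ s, M.adjugate s r * (if ρ r = u then Yent c n v (κ s) else 0) := by
    intro r
    by_cases hr : ρ r = u
    swap
    · simp [hr]
    simp only [hr, if_true]
    by_cases hv : c 1 ≤ v.1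
    · let r' : Fin m := ⟨v.1 - c 1, by omega⟩
      have hr' : ρ r' = v := by
        apply Fin.ext
        rw [hρ]
        simp only [r']
        omega
      have hrr : r' ≠ r := by
        rintro h
        rw [h, hr] at hr'
        exact hne hr'
      have : ∑ s, M.adjugate s r * Yent c n v (κ s) = (M * M.adjugate) r' r := by
        rw [Matrix.mul_apply]
        apply sum_congr rfl
        intro s _
        rw [hMe, hr', mul_comm]
      rw [this, Matrix.mul_adjugate]
      simp [hrr]
    · apply dvd_sum
      intro s _
      have hv1 := hb v.1 v.2 1
      have hu1 := hb u.1 u.2 1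
      have hur : u.1 = r.1 + c 1 := by rw [← hr, hρ]
      have hks := hb (κ s).1 (κ s).2 0
      have hg : genXB c n v (κ s) = 0 := by
        simp only [genXB, Matrix.of_apply]
        exact if_neg (by omega)
      by_cases hvs : v = κ s
      · have : Yent c n v (κ s) = Polynomial.X := by
          rw [Yent, hg, if_pos hvs]; simp
        rw [this, pow_succ]
        apply mul_dvd_mul_right
        apply hadj
        rw [← hvs, hr]
        omega
      · have : Yent c n v (κ s) = 0 := by
          rw [Yent, hg, if_neg hvs]; simp
        rw [this]; simp
  have hS2 : ∀ s, Polynomial.X ^ (dBS c l + 1) ∣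
      ∑ r, M.adjugate s r * (if κ s = v then Yent c n (ρ r) u else 0) := by
    intro s
    by_cases hs : κ s = v
    swap
    · simp [hs]
    simp only [hs, if_true]
    by_cases hu : u.1 < m
    · let s' : Fin m := ⟨u.1, hu⟩
      have hs' : κ s' = u := Fin.ext rfl
      have hss : s ≠ s' := by
        rintro h
        rw [← h, hs] at hs'
        exact hne hs'.symm
      have : ∑ r, M.adjugate s r * Yent c n (ρ r) u = (M.adjugate * M) s s' := by
        rw [Matrix.mul_apply]
        apply sum_congr rfl
        intro r _
        rw [hMe, hs']
      rw [this, Matrix.adjugate_mul]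
      simp [hss]
    · apply dvd_sum
      intro r _
      have hv1 := hb v.1 v.2 (l - 1)
      have hu1 := hb u.1 u.2 (l - 1)
      have hvs : v.1 = s.1 := by rw [← hs, hκ]
      have hks := hb (ρ r).1 (ρ r).2 l
      have hg : genXB c n (ρ r) u = 0 := by
        simp only [genXB, Matrix.of_apply]
        exact if_neg (by omega)
      by_cases hru : ρ r = u
      · have : Yent c n (ρ r) u = Polynomial.X := by
          rw [Yent, hg, if_pos hru]; simp
        rw [this, pow_succ]
        apply mul_dvd_mul_right
        apply hadj
        rw [hs, hru]
        omega
      · have : Yent c n (ρ r) u = 0 := by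
          rw [Yent, hg, if_neg hru]; simp
        rw [this]; simp
  set Z : Fin n → Fin n → Polynomial (Bring n) := fun a b =>
    (if a = u then Yent c n v b else 0) - (if b = v then Yent c n a u else 0) with hZ
  have hZd : Polynomial.X ^ (dBS c l + 1) ∣ ∑ s, ∑ r, M.adjugate s r * Z (ρ r) (κ s) := by
    have : ∑ s, ∑ r, M.adjugate s r * Z (ρ r) (κ s)
        = ∑ r, ∑ s, M.adjugate s r * (if ρ r = u then Yent c n v (κ s) else 0)
        - ∑ s, ∑ r, M.adjugate s r * (if κ s = v then Yent c n (ρ r) u else 0) := by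
      rw [sum_comm (γ := Fin m) (f := fun r s => M.adjugate s r * (if ρ r = u then Yent c n v (κ s) else 0))]
      simp only [hZ, mul_sub, sum_sub_distrib]
    rw [this]
    exact dvd_sub (dvd_sum fun r _ => hS1 r) (dvd_sum fun s _ => hS2 s)
  have hdet : dext D M.det - ∑ s, ∑ r, M.adjugate s r * Z (ρ r) (κ s) ∈
      Ideal.map (Polynomial.C (R := Bring n)) (Ideal.span {q : Bring n | ∃ a b : Fin n,
              blk c (a.1 + 1) ≤ blk c (b.1 + 1) ∧ q = X (a, b)}) := by
    rw [der_det]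
    simp only [← sum_sub_distrib, ← mul_sub]
    refine Ideal.sum_mem _ fun s _ => Ideal.sum_mem _ fun r _ => Ideal.mul_mem_left _ _ ?_
    rw [hMe]
    exact Yent_der c n D u v hD huv _ _
  have h := (Ideal.mem_map_C_iff.1 hdet) (dBS c l)
  rw [Polynomial.coeff_sub, Polynomial.X_pow_dvd_iff.1 hZd _ (Nat.lt_succ_self _), sub_zero,
    dext_coeff] at h
  exact h

/-- Lemma 3.11: `{p, f} ⊆ S(m⁻) f + S(g) p`.  For every `i ∈ {1,…,n-1}` the bracket
`D_i f = {x_{i,i+1}, f}` lies in the ideal generated by `f` and the coordinates of the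
parabolic `p`, and for every `i` with `i, i+1` in the same block so does
`D'_i f = {x_{i+1,i}, f}`. -/
theorem poisson_bracket_parabolic_BS_mem_span
    (l : ℕ) (hl : 2 ≤ l) (c : ℕ → ℕ) (hc : ∀ i ∈ Finset.Icc 1 l, 0 < c i)
    (hcl : c l = c 1) (n : ℕ) (hn0 : 0 < n) (hn : n = blkSum c l)
    (m : ℕ) (hm : m + c 1 = n) :
    (∀ p : ℕ, ∀ _ : 1 ≤ p, ∀ _ : p ≤ n - 1,
      ∀ D : Derivation ℂ (Bring n) (Bring n),
        (∀ r s : Fin n, D (X (r, s)) =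
            (if (r : ℕ) = p then X ((⟨p - 1, by omega⟩ : Fin n), s) else 0)
              - (if (s : ℕ) + 1 = p then X (r, (⟨p, by omega⟩ : Fin n)) else 0)) →
        D (BSfB c l n m hm) ∈
          Ideal.span (insert (BSfB c l n m hm)
            {q : Bring n | ∃ a b : Fin n,
              blk c (a.1 + 1) ≤ blk c (b.1 + 1) ∧ q = X (a, b)})) ∧
    (∀ p : ℕ, ∀ _ : 1 ≤ p, ∀ _ : p ≤ n - 1, blk c p = blk c (p + 1) →
      ∀ D' : Derivation ℂ (Bring n) (Bring n),
        (∀ r s : Fin n, D' (X (r, s)) =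
            (if (r : ℕ) + 1 = p then X ((⟨p, by omega⟩ : Fin n), s) else 0)
              - (if (s : ℕ) = p then X (r, (⟨p - 1, by omega⟩ : Fin n)) else 0)) →
        D' (BSfB c l n m hm) ∈
          Ideal.span (insert (BSfB c l n m hm)
            {q : Bring n | ∃ a b : Fin n,
              blk c (a.1 + 1) ≤ blk c (b.1 + 1) ∧ q = X (a, b)})) := by
  constructor
  · intro p hp1 hp2 D hD
    refine Ideal.span_mono (Set.subset_insert _ _) ?_
    refine main_aux l hl c hcl n hn m hm D ⟨p, by omega⟩ ⟨p - 1, by omega⟩ ?_ ?_ ?_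
    · simp only [ne_eq, Fin.mk.injEq]; omega
    · intro r s
      rw [hD]
      have e1 : (r = (⟨p, by omega⟩ : Fin n)) ↔ (r : ℕ) = p := by rw [Fin.ext_iff]
      have e2 : (s = (⟨p - 1, by omega⟩ : Fin n)) ↔ (s : ℕ) + 1 = p := by
        rw [Fin.ext_iff]; simp only []; omega
      simp only [e1, e2]
    · rw [blk_le_iff c (l := l) (by simp only []; omega)]
      have := (blk_le_iff c (l := l) (a := p + 1) (by omega) (blk c (p + 1))).1 le_rfl
      simp only []
      omega
  · intro p hp1 hp2 hpp D hD
    refine Ideal.span_mono (Set.subset_insert _ _) ?_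
    refine main_aux l hl c hcl n hn m hm D ⟨p - 1, by omega⟩ ⟨p, by omega⟩ ?_ ?_ ?_
    · simp only [ne_eq, Fin.mk.injEq]; omega
    · intro r s
      rw [hD]
      have e1 : (s = (⟨p, by omega⟩ : Fin n)) ↔ (s : ℕ) = p := by rw [Fin.ext_iff]
      have e2 : (r = (⟨p - 1, by omega⟩ : Fin n)) ↔ (r : ℕ) + 1 = p := by
        rw [Fin.ext_iff]; simp only []; omega
      simp only [e1, e2]
    · simp only []
      rw [show p - 1 + 1 = p by omega, hpp]

end
end

section
/- Let n, r, s be positive integers, let A be a commutative ring and t ∈ A, and let M be the n×n matrix over A with entries M_{ij} = t if j = i + s, M_{ij} = 1 if i = j + r, and M_{ij} = 0 otherwise (indices 1 ≤ i,j ≤ n; this is the matrix of t·e^s + f^r, where e and f are the down- and up-shift operators on a basis v_1,…,v_n). Then: if r+s does not divide n, det M = 0; and if n = h·(r+s) for a positive integer h, then det M = ε·t^{rh} for some sign ε ∈ {1, −1} (the paper records this sign as (−1)^{(r+s)h}). -/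
theorem shift_forced (n r s : ℕ) (hr : 0 < r) (hs : 0 < s) (σ : Equiv.Perm (Fin n))
    (hσ : ∀ i, (σ i : ℕ) = i + s ∨ (i : ℕ) = σ i + r) :
    ∀ k : ℕ, ∀ hk : k < n, (k % (r + s) < r → (σ ⟨k, hk⟩ : ℕ) = k + s) ∧
      (r ≤ k % (r + s) → k = (σ ⟨k, hk⟩ : ℕ) + r) := by
  intro k
  induction k using Nat.strong_induction_on with
  | _ k ih =>
    intro hk
    have hmod : r + s ≤ k → (k - (r + s)) % (r + s) = k % (r + s) := fun h =>
      (Nat.mod_eq_sub_mod h).symm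
    constructor
    · intro h
      rcases hσ ⟨k, hk⟩ with h1 | h1
      · exact h1
      · exfalso
        simp only at h1
        have hge : r + s ≤ k := by
          by_contra hlt
          rw [Nat.mod_eq_of_lt (by omega)] at h
          omega
        have h2 := (ih (k - (r + s)) (by omega) (by omega)).1 (by rw [hmod hge]; exact h)
        have h3 : σ ⟨k - (r + s), by omega⟩ = σ ⟨k, hk⟩ := Fin.ext (by omega)
        have h4 := congrArg Fin.val (σ.injective h3)
        simp only at h4
        omega
    · intro h
      have hle := Nat.mod_le k (r + s)
      obtain ⟨i, hi⟩ := σ.surjective ⟨k - r, by omega⟩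
      have hi' : (σ i : ℕ) = k - r := by rw [hi]
      rcases hσ i with h1 | h1
      · exfalso
        have hik : (i : ℕ) = k - (r + s) := by omega
        have h2 := (ih i (by omega) i.2).2 (by rw [hik, hmod (by omega)]; exact h)
        simp only [Fin.eta] at h2
        omega
      · have : i = ⟨k, hk⟩ := Fin.ext (by simp only; omega)
        rw [← this]; omega

theorem shift_prod {A : Type*} [CommRing A] (t : A) (r s h : ℕ) :
    ∏ i ∈ Finset.range (h * (r + s)), (if i % (r + s) < r then t else 1) = t ^ (r * h) := by
  induction h with
  | zero => simp
  | succ h ih =>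
    rw [Nat.succ_mul, Finset.prod_range_add, ih, Finset.prod_range_add, Nat.mul_succ r h, pow_add]
    congr 1
    have h1 : ∀ x ∈ Finset.range r, (if (h * (r + s) + x) % (r + s) < r then t else 1) = t := by
      intro x hx
      rw [Finset.mem_range] at hx
      rw [Nat.mul_add_mod_self_right, Nat.mod_eq_of_lt (by omega), if_pos (by omega)]
    have h2 : ∀ x ∈ Finset.range s,
        (if (h * (r + s) + (r + x)) % (r + s) < r then t else 1) = 1 := by
      intro x hx
      rw [Finset.mem_range] at hx
      rw [Nat.mul_add_mod_self_right, Nat.mod_eq_of_lt (by omega), if_neg (by omega)]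
    rw [Finset.prod_congr rfl h1, Finset.prod_congr rfl h2]
    simp

/-- Lemma 3.14: let `M` be the `n × n` matrix of `t·e^s + f^r`, where `e, f` are the down- and
up-shift endomorphisms, i.e. `M_{ij} = t` if `j = i + s`, `M_{ij} = 1` if `i = j + r` and
`M_{ij} = 0` otherwise (1-indexed).  If `r + s` does not divide `n` then `det M = 0`, and if
`n = h (r + s)` with `h > 0` then `det M = ± t^{r h}`. -/
theorem det_shift_matrix
    (n r s : ℕ) (hn : 0 < n) (hr : 0 < r) (hs : 0 < s)
    {A : Type*} [CommRing A] (t : A)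
    (M : Matrix (Fin n) (Fin n) A)
    (hM : M = Matrix.of fun i j : Fin n =>
      if (j : ℕ) = (i : ℕ) + s then t else if (i : ℕ) = (j : ℕ) + r then 1 else 0) :
    (¬ (r + s) ∣ n → M.det = 0) ∧
    (∀ h : ℕ, 0 < h → n = h * (r + s) →
      ∃ ε : A, (ε = 1 ∨ ε = -1) ∧ M.det = ε * t ^ (r * h)) := by
  have key : ∀ σ : Equiv.Perm (Fin n), ∏ i, M i (σ i) ≠ 0 →
      ∀ i, (σ i : ℕ) = i + s ∨ (i : ℕ) = σ i + r := by
    intro σ hne i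
    by_contra hc
    push Not at hc
    apply hne
    apply Finset.prod_eq_zero (Finset.mem_univ i)
    rw [hM, Matrix.of_apply, if_neg hc.1, if_neg hc.2]
  rw [← Matrix.det_transpose, Matrix.det_apply]
  simp only [Matrix.transpose_apply]
  constructor
  · intro hd
    apply Finset.sum_eq_zero
    intro σ _
    by_cases hz : ∏ i, M i (σ i) = 0
    · rw [hz, smul_zero]
    · exfalso
      have hf := shift_forced n r s hr hs σ (key σ hz)
      have hq : n % (r + s) ≠ 0 := fun h => hd (Nat.dvd_of_mod_eq_zero h)
      have hlt := Nat.mod_lt n (show r + s > 0 by omega)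
      have hdm := Nat.div_add_mod n (r + s)
      generalize n % (r + s) = q at *
      generalize n / (r + s) = k at *
      have main : ∀ x, x < r → x < q → (r + s) * k + x + s < n := by
        intro x hx hxq
        have hlt2 : (r + s) * k + x < n := by omega
        have h1 := (hf _ hlt2).1 (by
          rw [Nat.mul_add_mod_self_left, Nat.mod_eq_of_lt (by omega)]; exact hx)
        have h2 := (σ ⟨_, hlt2⟩).2
        omega
      by_cases hqr : q ≤ r
      · have := main (q - 1) (by omega) (by omega)
        omega
      · have := main (r - 1) (by omega) (by omega)
        omega
  · intro h _ hnh
    have hb : ∀ i : Fin n,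
        (if (i : ℕ) % (r + s) < r then (i : ℕ) + s else (i : ℕ) - r) < n := by
      intro i
      have hi := i.2
      split_ifs with hc
      · have hdm := Nat.div_add_mod (i : ℕ) (r + s)
        have h1 : (i : ℕ) / (r + s) < h := by
          rw [Nat.div_lt_iff_lt_mul (by omega), ← hnh]; exact hi
        have h2 := Nat.mul_le_mul_left (r + s) (Nat.succ_le_of_lt h1)
        rw [Nat.mul_succ, Nat.mul_comm _ h, ← hnh] at h2
        omega
      · omega
    let f : Fin n → Fin n := fun i => ⟨_, hb i⟩
    have hfi : Function.Injective f := by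
      intro i j hij
      have h1 := congrArg Fin.val hij
      simp only [f] at h1
      have hi := Nat.mod_le (i : ℕ) (r + s)
      have hj := Nat.mod_le (j : ℕ) (r + s)
      apply Fin.ext
      split_ifs at h1 with ha hb hb
      · omega
      · exfalso
        have : (j : ℕ) = i + (r + s) := by omega
        rw [this, Nat.add_mod_right] at hb
        exact hb ha
      · exfalso
        have : (i : ℕ) = j + (r + s) := by omega
        rw [this, Nat.add_mod_right] at ha
        exact ha hb
      · omega
    let τ : Equiv.Perm (Fin n) := Equiv.ofBijective f (Finite.injective_iff_bijective.mp hfi)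
    have hτ : ∀ i, (τ i : ℕ) = if (i : ℕ) % (r + s) < r then (i : ℕ) + s else (i : ℕ) - r :=
      fun i => rfl
    have hprod : ∏ i, M i (τ i) = t ^ (r * h) := by
      rw [← shift_prod t r s h, ← hnh, ← Fin.prod_univ_eq_prod_range
        (fun i => if i % (r + s) < r then t else 1) n]
      apply Finset.prod_congr rfl
      intro i _
      have hi := Nat.mod_le (i : ℕ) (r + s)
      rw [hM, Matrix.of_apply, hτ]
      by_cases hc : (i : ℕ) % (r + s) < r
      · simp only [if_pos hc, if_true]
      · simp only [if_neg hc]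
        rw [if_neg (by omega), if_pos (by omega)]
    rw [Finset.sum_eq_single τ, hprod]
    · rcases Int.units_eq_one_or (Equiv.Perm.sign τ) with h1 | h1
      · exact ⟨1, Or.inl rfl, by rw [h1]; simp⟩
      · exact ⟨-1, Or.inr rfl, by rw [h1]; simp⟩
    · intro σ _ hne
      by_cases hz : ∏ i, M i (σ i) = 0
      · rw [hz, smul_zero]
      · exfalso
        apply hne
        have hf := shift_forced n r s hr hs σ (key σ hz)
        ext i
        have h1 := hf i i.2
        simp only [Fin.eta] at h1
        rw [hτ]
        split_ifs with hc
        · exact h1.1 hc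
        · have := h1.2 (by omega)
          omega
    · intro hh
      exact absurd (Finset.mem_univ _) hh
end

section
/- The Benlolo–Sanderson element f is a weight vector of weight −(β_1+⋯+β_c) for the diagonal torus: for every monomial ∏_{(a,b)∈P} x_{ab}^{ν(a,b)} occurring with nonzero coefficient in f, and every q ∈ {1,…,n}, one has Σ_{(a,b)∈P} ν(a,b)·([a = q] − [b = q]) = 1 if q > n−c, −1 if q ≤ c, and 0 otherwise (here β_i = α_i + α_{i+1} + ⋯ + α_{n−i} = ε_i − ε_{n+1−i}). -/
open Finset MvPolynomial

noncomputable section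

/-- The index set `P` of positions of the nilradical `m`: pairs `(a, b)` of indices
(0-indexed here, representing the 1-indexed pair `(a+1, b+1)`) with `b < a` and
`blk (b+1) < blk (a+1)`. -/
abbrev Pos (c : ℕ → ℕ) (n : ℕ) : Type :=
  {p : Fin n × Fin n // p.2 < p.1 ∧ blk c (p.2.1 + 1) < blk c (p.1.1 + 1)}

/-- The generic matrix `𝒳` of the nilradical `m`. -/
def genX (c : ℕ → ℕ) (n : ℕ) : Matrix (Fin n) (Fin n) (MvPolynomial (Pos c n) ℂ) :=
  Matrix.of fun a b =>
    if h : b < a ∧ blk c (b.1 + 1) < blk c (a.1 + 1) then X (⟨(a, b), h⟩ : Pos c n) else 0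

/-- The matrix `M(t)`: the `(n-c) × (n-c)` submatrix of `𝒳 + t · Id` consisting of
rows `c+1, …, n` and columns `1, …, n-c`, viewed over `R[t]`.  Here `m = n - c`. -/
def Mmat (c : ℕ → ℕ) (n m : ℕ) (h : m + c 1 = n) :
    Matrix (Fin m) (Fin m) (Polynomial (MvPolynomial (Pos c n) ℂ)) :=
  Matrix.of fun i j =>
    Polynomial.C (genX c n (Fin.cast h (i.addNat (c 1)))
        (Fin.castLE (le_trans (Nat.le_add_right m (c 1)) (le_of_eq h)) j))
      + if (Fin.cast h (i.addNat (c 1)) : Fin n)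
            = Fin.castLE (le_trans (Nat.le_add_right m (c 1)) (le_of_eq h)) j
        then Polynomial.X else 0

/-- The Benlolo–Sanderson element: the coefficient of `t^d` in `det M(t)`. -/
def BSf (c : ℕ → ℕ) (l n m : ℕ) (h : m + c 1 = n) : MvPolynomial (Pos c n) ℂ :=
  ((Mmat c n m h).det).coeff (dBS c l)

/-- The point of the nilradical determined by `ξ : P → ℂ`. -/
def Xpt (c : ℕ → ℕ) (n : ℕ) (ξ : Pos c n → ℂ) : Matrix (Fin n) (Fin n) ℂ :=
  Matrix.of fun a b =>
    if h : b < a ∧ blk c (b.1 + 1) < blk c (a.1 + 1) then ξ ⟨(a, b), h⟩ else 0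

/-- All coefficients are weighted homogeneous of weight `N`. -/
def HomC {σ : Type} (w : σ → ℤ) (p : Polynomial (MvPolynomial σ ℂ)) (N : ℤ) : Prop :=
  ∀ k, IsWeightedHomogeneous w (p.coeff k) N

lemma HomC.mul {σ : Type} {w : σ → ℤ} {p q : Polynomial (MvPolynomial σ ℂ)} {N N' : ℤ}
    (hp : HomC w p N) (hq : HomC w q N') : HomC w (p * q) (N + N') := by
  intro k
  rw [Polynomial.coeff_mul]
  exact IsWeightedHomogeneous.sum _ _ _ (fun x _ => (hp x.1).mul (hq x.2))

lemma HomC.one {σ : Type} {w : σ → ℤ} : HomC w 1 0 := by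
  intro k
  rw [Polynomial.coeff_one]
  split_ifs
  · exact isWeightedHomogeneous_one ℂ w
  · exact isWeightedHomogeneous_zero ℂ w _

lemma HomC.prod {σ ι : Type} {w : σ → ℤ} (s : Finset ι)
    (p : ι → Polynomial (MvPolynomial σ ℂ)) (N : ι → ℤ)
    (hp : ∀ i ∈ s, HomC w (p i) (N i)) : HomC w (∏ i ∈ s, p i) (∑ i ∈ s, N i) := by
  classical
  induction s using Finset.induction_on with
  | empty => simpa using HomC.one
  | insert a s ha ih =>
    rw [Finset.prod_insert ha, Finset.sum_insert ha]
    exact (hp a (by simp)).mul (ih fun i hi => hp i (by simp [hi]))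

lemma HomC.det {σ : Type} {w : σ → ℤ} {m : ℕ}
    (A : Matrix (Fin m) (Fin m) (Polynomial (MvPolynomial σ ℂ))) (r s : Fin m → ℤ)
    (hA : ∀ i j, HomC w (A i j) (r i - s j)) : HomC w A.det (∑ i, r i - ∑ i, s i) := by
  intro k
  rw [Matrix.det_apply, Polynomial.finset_sum_coeff]
  refine IsWeightedHomogeneous.sum _ _ _ (fun τ _ => ?_)
  have h := HomC.prod (w := w) Finset.univ (fun i => A (τ i) i) (fun i => r (τ i) - s i)
    (fun i _ => hA _ _) k
  rw [Finset.sum_sub_distrib, Equiv.sum_comp τ r] at h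
  rcases Int.units_eq_one_or (Equiv.Perm.sign τ) with h1 | h1
  · rw [h1, one_smul]; exact h
  · rw [h1, Units.neg_smul, one_smul, Polynomial.coeff_neg]
    exact (weightedHomogeneousSubmodule ℂ w _).neg_mem h

/-- 2.20: the Benlolo–Sanderson element `f` is a weight vector of weight
`-(β₁ + ⋯ + β_c) = -Σ_{i=1}^{c} (ε_i - ε_{n+1-i})` for the diagonal torus: each monomial of
`f` has, for every `q ∈ {1,…,n}`, total `ε_q`-degree `1` if `q > n - c`, `-1` if `q ≤ c`,
and `0` otherwise. -/
theorem BS_element_weight_vector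
    (l : ℕ) (hl : 2 ≤ l) (c : ℕ → ℕ) (hc : ∀ i ∈ Finset.Icc 1 l, 0 < c i)
    (hcl : c l = c 1) (n : ℕ) (hn : n = blkSum c l) (m : ℕ) (hm : m + c 1 = n)
    (ν : Pos c n →₀ ℕ) (hν : ν ∈ (BSf c l n m hm).support) (q : Fin n) :
    ∑ p ∈ ν.support, (ν p : ℤ) *
        ((if p.1.1 = q then 1 else 0) - (if p.1.2 = q then 1 else 0)) =
      if n - c 1 < (q : ℕ) + 1 then 1 else if (q : ℕ) + 1 ≤ c 1 then -1 else 0 := by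
  classical
  set w : Pos c n → ℤ := fun p => (if p.1.1 = q then 1 else 0) - (if p.1.2 = q then 1 else 0)
    with hw
  have hnc : c 1 + c 1 ≤ n := by
    have h1 : ∑ i ∈ ({1, l} : Finset ℕ), c i ≤ blkSum c l := by
      refine Finset.sum_le_sum_of_subset ?_
      intro i hi
      simp only [Finset.mem_insert, Finset.mem_singleton] at hi
      simp only [Finset.mem_Icc]
      omega
    rw [Finset.sum_pair (by omega), hcl, ← hn] at h1
    exact h1
  have key := HomC.det (w := w) (Mmat c n m hm)
    (fun i => if (Fin.cast hm (i.addNat (c 1)) : Fin n) = q then 1 else 0)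
    (fun j => if Fin.castLE (le_trans (Nat.le_add_right m (c 1)) (le_of_eq hm)) j = q
      then 1 else 0) (by
    intro i j k
    simp only [Mmat, Matrix.of_apply, Polynomial.coeff_add]
    generalize (Fin.cast hm (i.addNat (c 1)) : Fin n) = a
    generalize Fin.castLE (le_trans (Nat.le_add_right m (c 1)) (le_of_eq hm)) j = b
    refine IsWeightedHomogeneous.add ?_ ?_
    · rw [Polynomial.coeff_C]
      split_ifs with hk
      all_goals try exact isWeightedHomogeneous_zero ℂ w _
      all_goals
        simp only [genX, Matrix.of_apply]
        split_ifs with hab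
        · convert isWeightedHomogeneous_X ℂ w (⟨(a, b), hab⟩ : Pos c n) using 1
          simp_all
        · exact isWeightedHomogeneous_zero ℂ w _
    · by_cases hab : a = b
      · subst hab
        rw [if_pos rfl, sub_self, Polynomial.coeff_X]
        by_cases hk : 1 = k
        · rw [if_pos hk]; exact isWeightedHomogeneous_one ℂ w
        · rw [if_neg hk]; exact isWeightedHomogeneous_zero ℂ w _
      · rw [if_neg hab, Polynomial.coeff_zero]
        exact isWeightedHomogeneous_zero ℂ w _) (dBS c l)
  have hwt := key (MvPolynomial.mem_support_iff.mp hν)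
  have e1 : (∑ i : Fin m, if (Fin.cast hm (i.addNat (c 1)) : Fin n) = q then (1:ℤ) else 0)
      = if c 1 ≤ (q : ℕ) then 1 else 0 := by
    split_ifs with h
    · rw [Finset.sum_eq_single (⟨(q : ℕ) - c 1, by omega⟩ : Fin m)]
      · rw [if_pos]; ext; simp; omega
      · intro b _ hb
        rw [if_neg]
        rintro rfl
        exact hb (by ext; simp)
      · simp
    · refine Finset.sum_eq_zero fun i _ => if_neg ?_
      rintro rfl
      simp at h
  have e2 : (∑ j : Fin m, if Fin.castLE (le_trans (Nat.le_add_right m (c 1)) (le_of_eq hm)) j = q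
      then (1:ℤ) else 0) = if (q : ℕ) < m then 1 else 0 := by
    split_ifs with h
    · rw [Finset.sum_eq_single (⟨(q : ℕ), h⟩ : Fin m)]
      · rw [if_pos]; ext; simp
      · intro b _ hb
        rw [if_neg]
        rintro rfl
        exact hb (by ext; simp)
      · simp
    · refine Finset.sum_eq_zero fun i _ => if_neg ?_
      rintro rfl
      simp at h
  rw [e1, e2, Finsupp.weight_apply, Finsupp.sum] at hwt
  simp only [nsmul_eq_mul] at hwt
  rw [hwt]
  split_ifs <;> omega

end
end

section
/- If the system (1)–(3) has a solution with all b_i real, then c_s ≠ c for every s with 2 ≤ s ≤ l−1. Conversely, if c_s ≠ c for every s with 2 ≤ s ≤ l−1, then the system has a solution in which every b_i is a nonnegative integer, namely b_2 = max(c,c_2) − 1 and b_i = c_{i−1} + max(c,c_i) − max(c,c_{i−1}) for 2 < i ≤ l. -/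
open Finset

theorem aux_top (f : ℕ → ℝ) (a s : ℕ) (ha : 1 ≤ a) (h : a ≤ s) :
    ∑ i ∈ Finset.Icc a s, f i = (∑ i ∈ Finset.Icc a (s - 1), f i) + f s := by
  obtain ⟨k, rfl⟩ : ∃ k, s = k + 1 := ⟨s - 1, by omega⟩
  rw [Finset.sum_Icc_succ_top h]
  simp

theorem aux_split (f : ℕ → ℝ) (s l : ℕ) (hs : 2 ≤ s) (h : s ≤ l) :
    ∑ i ∈ Finset.Icc 2 l, f i =
      (∑ i ∈ Finset.Icc 2 s, f i) + ∑ i ∈ Finset.Icc (s + 1) l, f i := by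
  induction l, h using Nat.le_induction with
  | base => simp
  | succ n hn ih =>
    rw [Finset.sum_Icc_succ_top (by omega), Finset.sum_Icc_succ_top (by omega), ih]
    ring

/-- Lemma 4.1: the system
(1) `1 + Σ_{i=2}^{s} b_i ≤ Σ_{i=2}^{s-1} c_i + max (c, c_s)` for `s = 2, …, l-1`,
(2) `1 + Σ_{i=s+1}^{l} b_i ≤ Σ_{i=s+1}^{l-1} c_i + max (c, c_s)` for `s = 2, …, l-1`,
(3) `1 + Σ_{i=2}^{l} b_i = Σ_{i=2}^{l} c_i`
has a real solution only if `c_s ≠ c` for all `2 ≤ s ≤ l-1`; conversely if the latter holds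
then the explicit nonnegative integers `b_2 = max (c, c_2) - 1`,
`b_i = c_{i-1} + max (c, c_i) - max (c, c_{i-1})` solve it. -/
theorem BS_inequality_system
    (l : ℕ) (hl : 2 ≤ l) (c : ℕ) (hc : 0 < c) (cc : ℕ → ℕ)
    (hcc : ∀ i, 2 ≤ i → i ≤ l → 0 < cc i) (hccl : cc l = c) :
    ((∃ b : ℕ → ℝ,
        (∀ s, 2 ≤ s → s ≤ l - 1 →
          1 + ∑ i ∈ Finset.Icc 2 s, b i ≤
            (∑ i ∈ Finset.Icc 2 (s - 1), (cc i : ℝ)) + (max c (cc s) : ℕ)) ∧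
        (∀ s, 2 ≤ s → s ≤ l - 1 →
          1 + ∑ i ∈ Finset.Icc (s + 1) l, b i ≤
            (∑ i ∈ Finset.Icc (s + 1) (l - 1), (cc i : ℝ)) + (max c (cc s) : ℕ)) ∧
        (1 + ∑ i ∈ Finset.Icc 2 l, b i = ∑ i ∈ Finset.Icc 2 l, (cc i : ℝ))) →
      ∀ s, 2 ≤ s → s ≤ l - 1 → cc s ≠ c) ∧
    ((∀ s, 2 ≤ s → s ≤ l - 1 → cc s ≠ c) →
      ∀ bn : ℕ → ℕ,
        bn 2 = max c (cc 2) - 1 →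
        (∀ i, 2 < i → i ≤ l → bn i = cc (i - 1) + max c (cc i) - max c (cc (i - 1))) →
        (∀ s, 2 ≤ s → s ≤ l - 1 →
          1 + ∑ i ∈ Finset.Icc 2 s, (bn i : ℝ) ≤
            (∑ i ∈ Finset.Icc 2 (s - 1), (cc i : ℝ)) + (max c (cc s) : ℕ)) ∧
        (∀ s, 2 ≤ s → s ≤ l - 1 →
          1 + ∑ i ∈ Finset.Icc (s + 1) l, (bn i : ℝ) ≤
            (∑ i ∈ Finset.Icc (s + 1) (l - 1), (cc i : ℝ)) + (max c (cc s) : ℕ)) ∧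
        (1 + ∑ i ∈ Finset.Icc 2 l, (bn i : ℝ) = ∑ i ∈ Finset.Icc 2 l, (cc i : ℝ))) := by
  constructor
  · rintro ⟨b, h1, h2, h3⟩ s hs hsl heq
    have a1 := h1 s hs hsl
    have a2 := h2 s hs hsl
    have e1 := aux_split b s l hs (by omega)
    have e2 := aux_split (fun i => (cc i : ℝ)) s l hs (by omega)
    have e3 := aux_top (fun i => (cc i : ℝ)) 2 s (by omega) hs
    have e4 := aux_top (fun i => (cc i : ℝ)) (s + 1) l (by omega) (by omega)
    simp only [heq, hccl, max_self] at a1 a2 e2 e3 e4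
    linarith
  · intro hne bn hb2 hb
    have key : ∀ s, 2 ≤ s → s ≤ l → 1 + ∑ i ∈ Finset.Icc 2 s, (bn i : ℝ) =
        (∑ i ∈ Finset.Icc 2 (s - 1), (cc i : ℝ)) + (max c (cc s) : ℕ) := by
      intro s hs
      induction s, hs using Nat.le_induction with
      | base =>
        intro _
        have : 1 + bn 2 = max c (cc 2) := by omega
        simp only [Finset.Icc_self, Finset.sum_singleton]
        rw [← this]
        simp
      | succ n hn ih =>
        intro h
        have ih := ih (by omega)
        have hbn := hb (n + 1) (by omega) h
        rw [Nat.add_sub_cancel] at hbn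
        have h' : bn (n + 1) + max c (cc n) = cc n + max c (cc (n + 1)) := by omega
        have h'' : (bn (n + 1) : ℝ) + (max c (cc n) : ℕ) = cc n + (max c (cc (n + 1)) : ℕ) := by
          exact_mod_cast h'
        rw [Finset.sum_Icc_succ_top (by omega), Nat.add_sub_cancel,
          aux_top (fun i => (cc i : ℝ)) 2 n (by omega) hn]
        linarith
    have tot : 1 + ∑ i ∈ Finset.Icc 2 l, (bn i : ℝ) = ∑ i ∈ Finset.Icc 2 l, (cc i : ℝ) := by
      rw [key l hl le_rfl, aux_top (fun i => (cc i : ℝ)) 2 l (by omega) hl, hccl, max_self]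
    refine ⟨fun s hs hsl => (key s hs (by omega)).le, fun s hs hsl => ?_, tot⟩
    have a1 := key s hs (by omega)
    have e1 := aux_split (fun i => (bn i : ℝ)) s l hs (by omega)
    have e2 := aux_split (fun i => (cc i : ℝ)) s l hs (by omega)
    have e3 := aux_top (fun i => (cc i : ℝ)) 2 s (by omega) hs
    have e4 := aux_top (fun i => (cc i : ℝ)) (s + 1) l (by omega) (by omega)
    have hn := hne s hs hsl
    have m : 1 + cc s + c ≤ 2 * max c (cc s) := by omega
    have m' : 1 + (cc s : ℝ) + c ≤ 2 * (max c (cc s) : ℕ) := by exact_mod_cast m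
    simp only [hccl] at e4
    linarith
end

section
/- Let (T_a)_{a≥1} and (S_a)_{a≥1} be the row systems of two Young tableaux whose entry sets are disjoint (no integer occurs as an entry of both). Then the merged system (T_a ∪ S_a)_{a≥1} is again the row system of a Young tableau: |T_{a+1} ∪ S_{a+1}| ≤ |T_a ∪ S_a| for all a, and for every a and every k with 1 ≤ k ≤ |T_{a+1} ∪ S_{a+1}|, the k-th smallest element of T_{a+1} ∪ S_{a+1} is strictly greater than the k-th smallest element of T_a ∪ S_a. -/
open Finset

/-- The `k`-th smallest element of a finite set of naturals (1-indexed; junk value `0` if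
`k` is out of range). -/
def kthSmall (s : Finset ℕ) (k : ℕ) : ℕ := (s.sort (· ≤ ·)).getD (k - 1) 0

theorem kthSmall_lt_iff (s : Finset ℕ) (k m : ℕ) (h1 : 1 ≤ k) (h2 : k ≤ s.card) :
    kthSmall s k < m ↔ k ≤ (s.filter (· < m)).card := by
  have hk : k - 1 < s.card := by omega
  have he : kthSmall s k = s.orderEmbOfFin rfl ⟨k - 1, hk⟩ := by
    rw [Finset.orderEmbOfFin_apply]
    unfold kthSmall
    rw [List.getD_eq_getElem]
    · rfl
  rw [he]
  constructor
  · intro h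
    have hsub : (Finset.Iic (⟨k - 1, hk⟩ : Fin s.card)).map (s.orderEmbOfFin rfl).toEmbedding
        ⊆ s.filter (· < m) := by
      intro x hx
      simp only [Finset.mem_map, Finset.mem_Iic] at hx
      obtain ⟨i, hi, rfl⟩ := hx
      rw [Finset.mem_filter]
      exact ⟨Finset.orderEmbOfFin_mem s rfl i,
        lt_of_le_of_lt ((s.orderEmbOfFin rfl).monotone hi) h⟩
    have := Finset.card_le_card hsub
    rw [Finset.card_map, Fin.card_Iic] at this
    simp only at this
    omega
  · intro h
    by_contra hc
    have hsub : s.filter (· < m) ⊆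
        (Finset.Iio (⟨k - 1, hk⟩ : Fin s.card)).map (s.orderEmbOfFin rfl).toEmbedding := by
      intro x hx
      rw [Finset.mem_filter] at hx
      have hr : x ∈ Set.range (s.orderEmbOfFin rfl) := by
        rw [Finset.range_orderEmbOfFin]; exact hx.1
      obtain ⟨i, rfl⟩ := hr
      refine Finset.mem_map.2 ⟨i, Finset.mem_Iio.2 ?_, rfl⟩
      exact (s.orderEmbOfFin rfl).lt_iff_lt.1 (lt_of_lt_of_le hx.2 (not_lt.1 hc))
    have := Finset.card_le_card hsub
    rw [Finset.card_map, Fin.card_Iio] at this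
    simp only at this
    omega

theorem count_le_of_col (A B : Finset ℕ) (hc : B.card ≤ A.card)
    (h : ∀ k, 1 ≤ k → k ≤ B.card → kthSmall A k < kthSmall B k) (m : ℕ) :
    (B.filter (· < m + 1)).card ≤ (A.filter (· < m)).card := by
  rcases Nat.eq_zero_or_pos (B.filter (· < m + 1)).card with h0 | h0
  · omega
  · have hB : (B.filter (· < m + 1)).card ≤ B.card := Finset.card_filter_le _ _
    have h3 := (kthSmall_lt_iff B _ (m + 1) h0 hB).2 le_rfl
    have h4 := h _ h0 hB
    exact (kthSmall_lt_iff A _ m h0 (hB.trans hc)).1 (by omega)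

/-- Lemma 2.7: if `(T_a)` and `(S_a)` are the row systems of two Young tableaux with disjoint
entry sets, then the merged system `(T_a ∪ S_a)` is again the row system of a Young tableau. -/
theorem merge_row_systems_isYoungTableau
    (T S : ℕ → Finset ℕ)
    (hTpos : ∀ a, 1 ≤ a → ∀ x ∈ T a, 0 < x)
    (hSpos : ∀ a, 1 ≤ a → ∀ x ∈ S a, 0 < x)
    (hTfin : ∃ N, ∀ a, N ≤ a → T a = ∅)
    (hSfin : ∃ N, ∀ a, N ≤ a → S a = ∅)
    (hTrows : ∀ a a', 1 ≤ a → 1 ≤ a' → a ≠ a' → Disjoint (T a) (T a'))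
    (hSrows : ∀ a a', 1 ≤ a → 1 ≤ a' → a ≠ a' → Disjoint (S a) (S a'))
    (hTcard : ∀ a, 1 ≤ a → (T (a + 1)).card ≤ (T a).card)
    (hScard : ∀ a, 1 ≤ a → (S (a + 1)).card ≤ (S a).card)
    (hTcol : ∀ a, 1 ≤ a → ∀ k, 1 ≤ k → k ≤ (T (a + 1)).card →
      kthSmall (T a) k < kthSmall (T (a + 1)) k)
    (hScol : ∀ a, 1 ≤ a → ∀ k, 1 ≤ k → k ≤ (S (a + 1)).card →
      kthSmall (S a) k < kthSmall (S (a + 1)) k)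
    (hTS : ∀ a a', 1 ≤ a → 1 ≤ a' → Disjoint (T a) (S a')) :
    (∀ a, 1 ≤ a → (T (a + 1) ∪ S (a + 1)).card ≤ (T a ∪ S a).card) ∧
    (∀ a, 1 ≤ a → ∀ k, 1 ≤ k → k ≤ (T (a + 1) ∪ S (a + 1)).card →
      kthSmall (T a ∪ S a) k < kthSmall (T (a + 1) ∪ S (a + 1)) k) := by
  have hcard : ∀ a, 1 ≤ a → (T (a + 1) ∪ S (a + 1)).card ≤ (T a ∪ S a).card := by
    intro a ha
    rw [Finset.card_union_of_disjoint (hTS _ _ (by omega) (by omega)),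
      Finset.card_union_of_disjoint (hTS _ _ ha ha)]
    exact add_le_add (hTcard a ha) (hScard a ha)
  refine ⟨hcard, ?_⟩
  intro a ha k h1 h2
  have hk := (kthSmall_lt_iff _ k (kthSmall (T (a + 1) ∪ S (a + 1)) k + 1) h1 h2).1
    (Nat.lt_succ_self _)
  rw [kthSmall_lt_iff _ k _ h1 (h2.trans (hcard a ha))]
  generalize kthSmall (T (a + 1) ∪ S (a + 1)) k = m at hk ⊢
  have hT := count_le_of_col (T a) (T (a + 1)) (hTcard a ha) (hTcol a ha) m
  have hS := count_le_of_col (S a) (S (a + 1)) (hScard a ha) (hScol a ha) m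
  rw [Finset.filter_union] at hk ⊢
  rw [Finset.card_union_of_disjoint (Finset.disjoint_filter_filter (hTS a a ha ha))]
  have := Finset.card_union_le ((T (a + 1)).filter (· < m + 1)) ((S (a + 1)).filter (· < m + 1))
  omega
end

section
/- Fix i ∈ {2,…,l} and suppose there exists j < i with c_j ≥ c_i. Let v := min{ c_j : j < i, c_j ≥ c_i }, let i′ := max{ j < i : c_j = v }, and let ς := max C_i (the largest element of the i-th block). Define a new row system R′ by R′_{c_i} := R_{c_i} ∖ {ς}, R′_{c_{i′}+1} := R_{c_{i′}+1} ∪ {ς}, and R′_a := R_a for all other a. Then R′ is the row system of a (standard) Young tableau: |R′_{a+1}| ≤ |R′_a| for all a ≥ 1, and for every a and every k with 1 ≤ k ≤ |R′_{a+1}|, the k-th smallest element of R′_{a+1} is strictly greater than the k-th smallest element of R′_a. (This is the tableau T_I(i) obtained from T_I by moving ς from row c_i to row c_{i′}+1.) -/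
open Finset

noncomputable section

/-- The `a`-th row of the Richardson tableau `T_I`: the set of `a`-th smallest elements of
the blocks `C_j` with `c_j ≥ a`. -/
def RIrow (c : ℕ → ℕ) (l a : ℕ) : Finset ℕ :=
  ((Finset.Icc 1 l).filter fun j => a ≤ c j).image fun j => blkSum c (j - 1) + a

theorem aux_kth_eq (s : Finset ℕ) (k : ℕ) (hk : k < s.card) :
    kthSmall s (k + 1) = s.orderEmbOfFin rfl ⟨k, hk⟩ := by
  unfold kthSmall
  rw [Finset.orderEmbOfFin_apply]
  simp [List.getD_eq_getElem?_getD, hk]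

theorem aux_inj (A B : Finset ℕ) (f : ℕ → ℕ) (hf : Set.InjOn f B)
    (hA : ∀ b ∈ B, f b ∈ A ∧ f b < b) :
    B.card ≤ A.card ∧ ∀ k, 1 ≤ k → k ≤ B.card → kthSmall A k < kthSmall B k := by
  have hcard : B.card ≤ A.card :=
    Finset.card_le_card_of_injOn f (fun b hb => (hA b hb).1) hf
  refine ⟨hcard, ?_⟩
  intro k hk1 hk
  obtain ⟨m, rfl⟩ : ∃ m, k = m + 1 := ⟨k - 1, by omega⟩
  have hmB : m < B.card := by omega
  have hmA : m < A.card := by omega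
  rw [aux_kth_eq A m hmA, aux_kth_eq B m hmB]
  by_contra hcon
  push Not at hcon
  set b := B.orderEmbOfFin rfl ⟨m, hmB⟩ with hb
  have h1 : m + 1 ≤ (B.filter (· ≤ b)).card := by
    have : ((Finset.Iic (⟨m, hmB⟩ : Fin B.card)).image (B.orderEmbOfFin rfl)) ⊆
        B.filter (· ≤ b) := by
      intro x hx
      obtain ⟨y, hy, rfl⟩ := Finset.mem_image.1 hx
      refine Finset.mem_filter.2 ⟨Finset.orderEmbOfFin_mem _ _ _, ?_⟩
      exact (B.orderEmbOfFin rfl).monotone (Finset.mem_Iic.1 hy)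
    have h := Finset.card_le_card this
    rw [Finset.card_image_of_injective _ (B.orderEmbOfFin rfl).injective] at h
    simpa using h
  have h2 : (A.filter (· < b)).card ≤ m := by
    have : A.filter (· < b) ⊆
        ((Finset.Iio (⟨m, hmA⟩ : Fin A.card)).image (A.orderEmbOfFin rfl)) := by
      intro x hx
      obtain ⟨hxA, hxb⟩ := Finset.mem_filter.1 hx
      have hr : x ∈ Set.range (A.orderEmbOfFin rfl) := by
        rw [Finset.range_orderEmbOfFin]; exact hxA
      obtain ⟨y, rfl⟩ := hr
      refine Finset.mem_image.2 ⟨y, Finset.mem_Iio.2 ?_, rfl⟩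
      exact (A.orderEmbOfFin rfl).lt_iff_lt.1 (lt_of_lt_of_le hxb hcon)
    have h := Finset.card_le_card this
    rw [Finset.card_image_of_injective _ (A.orderEmbOfFin rfl).injective] at h
    simpa using h
  have h3 : (B.filter (· ≤ b)).card ≤ (A.filter (· < b)).card := by
    refine Finset.card_le_card_of_injOn f ?_ (hf.mono ?_)
    · intro x hx
      have hx' := Finset.mem_filter.1 hx
      exact Finset.mem_filter.2 ⟨(hA x hx'.1).1, lt_of_lt_of_le (hA x hx'.1).2 hx'.2⟩
    · intro x hx
      exact (Finset.mem_filter.1 hx).1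
  omega

theorem aux_blk_succ (c : ℕ → ℕ) (j : ℕ) (hj : 1 ≤ j) :
    blkSum c j = blkSum c (j - 1) + c j := by
  obtain ⟨m, rfl⟩ : ∃ m, j = m + 1 := ⟨j - 1, by omega⟩
  unfold blkSum
  rw [Finset.sum_Icc_succ_top (by omega)]
  simp

theorem aux_blk_mono (c : ℕ → ℕ) {j k : ℕ} (h : j ≤ k) : blkSum c j ≤ blkSum c k := by
  unfold blkSum
  exact Finset.sum_le_sum_of_subset (Finset.Icc_subset_Icc_right h)

theorem aux_uniq (c : ℕ → ℕ) {j k x y : ℕ} (hj : 1 ≤ j) (hk : 1 ≤ k) (hx : 1 ≤ x)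
    (hxj : x ≤ c j) (hy : 1 ≤ y) (hyk : y ≤ c k)
    (h : blkSum c (j - 1) + x = blkSum c (k - 1) + y) : j = k := by
  have e1 := aux_blk_succ c j hj
  have e2 := aux_blk_succ c k hk
  rcases lt_trichotomy j k with h1 | h1 | h1
  · have := aux_blk_mono c (show j ≤ k - 1 by omega)
    omega
  · exact h1
  · have := aux_blk_mono c (show k ≤ j - 1 by omega)
    omega

theorem aux_mem (c : ℕ → ℕ) (l a x : ℕ) :
    x ∈ RIrow c l a ↔ ∃ j, 1 ≤ j ∧ j ≤ l ∧ a ≤ c j ∧ blkSum c (j - 1) + a = x := by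
  simp [RIrow, and_assoc]

/-- Lemma 2.15: moving the largest entry `ς = ς_i` of the `i`-th chain of the Richardson
tableau `T_I` from row `c_i` to row `c_{i'} + 1` (where `i' < i` is maximal with `c_{i'}`
minimal such that `c_{i'} ≥ c_i`) again yields the row system of a standard Young tableau,
namely `T_I(i)`. -/
theorem moved_row_system_isYoungTableau
    (l : ℕ) (hl : 1 ≤ l) (c : ℕ → ℕ) (hc : ∀ j ∈ Finset.Icc 1 l, 0 < c j)
    (i : ℕ) (hi2 : 2 ≤ i) (hil : i ≤ l)
    (hex : ∃ j, 1 ≤ j ∧ j < i ∧ c i ≤ c j)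
    (v : ℕ) (hv : v = sInf {u | ∃ j, 1 ≤ j ∧ j < i ∧ c i ≤ c j ∧ c j = u})
    (i' : ℕ) (hi' : i' = sSup {j | 1 ≤ j ∧ j < i ∧ c j = v})
    (R' : ℕ → Finset ℕ)
    (hR' : ∀ a, R' a =
      if a = c i then (RIrow c l a).erase (blkSum c i)
      else if a = c i' + 1 then insert (blkSum c i) (RIrow c l a)
      else RIrow c l a) :
    (∀ a, 1 ≤ a → (R' (a + 1)).card ≤ (R' a).card) ∧
    (∀ a, 1 ≤ a → ∀ k, 1 ≤ k → k ≤ (R' (a + 1)).card →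
      kthSmall (R' a) k < kthSmall (R' (a + 1)) k) := by
  have hne : {u | ∃ j, 1 ≤ j ∧ j < i ∧ c i ≤ c j ∧ c j = u}.Nonempty := by
    obtain ⟨j, h1, h2, h3⟩ := hex
    exact ⟨c j, j, h1, h2, h3, rfl⟩
  have hvm := Nat.sInf_mem hne
  rw [← hv] at hvm
  obtain ⟨j0, hj1, hj2, hj3, hj4⟩ := hvm
  have him : i' ∈ {j | 1 ≤ j ∧ j < i ∧ c j = v} := by
    rw [hi']
    exact Nat.sSup_mem ⟨j0, hj1, hj2, hj4⟩ ⟨i, fun x hx => hx.2.1.le⟩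
  obtain ⟨hi1, hi3, hi4⟩ := him
  have hle : c i ≤ c i' := by omega
  have hci : 0 < c i := hc i (Finset.mem_Icc.2 ⟨by omega, hil⟩)
  have es := aux_blk_succ c i (by omega)
  have es' := aux_blk_succ c i' hi1
  have hlt : blkSum c i' < blkSum c i := by
    have := aux_blk_mono c (show i' ≤ i - 1 by omega)
    omega
  have key : ∀ a, 1 ≤ a → ∃ f : ℕ → ℕ, Set.InjOn f (R' (a + 1)) ∧
      ∀ b ∈ R' (a + 1), f b ∈ R' a ∧ f b < b := by
    intro a ha
    -- predecessor of an element of an original row lies in the new row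
    have hpred : ∀ b ∈ RIrow c l (a + 1), b - 1 ∈ R' a ∧ b - 1 < b := by
      intro b hb
      obtain ⟨j, h1, h2, h3, rfl⟩ := (aux_mem c l (a + 1) b).1 hb
      refine ⟨?_, by omega⟩
      have hm : blkSum c (j - 1) + (a + 1) - 1 ∈ RIrow c l a :=
        (aux_mem _ _ _ _).2 ⟨j, h1, h2, by omega, by omega⟩
      rw [hR']
      split_ifs with g1 g2
      · refine Finset.mem_erase.2 ⟨?_, hm⟩
        intro he
        have : j = i := aux_uniq c (x := a) (y := c i) h1 (by omega) ha (by omega) hci le_rfl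
          (by omega)
        subst this
        omega
      · exact Finset.mem_insert_of_mem hm
      · exact hm
    by_cases hq : a = c i'
    · have hB : R' (a + 1) = insert (blkSum c i) (RIrow c l (a + 1)) := by
        rw [hR', if_neg (by omega), if_pos (by omega)]
      have hnot : ∀ b ∈ RIrow c l (a + 1), b - 1 ≠ blkSum c i' ∧ 1 ≤ b := by
        intro b hb
        obtain ⟨j, h1, h2, h3, rfl⟩ := (aux_mem c l (a + 1) b).1 hb
        refine ⟨?_, by omega⟩
        intro he
        have : j = i' := aux_uniq c (x := a) (y := c i') h1 hi1 ha (by omega) (by omega) le_rfl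
          (by omega)
        subst this
        omega
      refine ⟨fun b => if b = blkSum c i then blkSum c i' else b - 1, ?_, ?_⟩
      · intro x hx y hy hxy
        rw [hB] at hx hy
        have hx := Finset.mem_insert.1 (Finset.mem_coe.1 hx)
        have hy := Finset.mem_insert.1 (Finset.mem_coe.1 hy)
        have hx' := fun h => hnot x h
        have hy' := fun h => hnot y h
        simp only at hxy
        grind
      · intro b hb
        rw [hB] at hb
        by_cases hbs : b = blkSum c i
        · simp only [if_pos hbs]
          refine ⟨?_, by omega⟩
          have hm : blkSum c i' ∈ RIrow c l a :=
            (aux_mem _ _ _ _).2 ⟨i', hi1, by omega, by omega, by omega⟩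
          rw [hR']
          split_ifs with g1 g2
          · exact Finset.mem_erase.2 ⟨by omega, hm⟩
          · exact Finset.mem_insert_of_mem hm
          · exact hm
        · simp only [if_neg hbs]
          exact hpred b ((Finset.mem_insert.1 hb).resolve_left hbs)
    · have hsub : ∀ b ∈ R' (a + 1), b ∈ RIrow c l (a + 1) := by
        intro b hb
        rw [hR'] at hb
        split_ifs at hb with g1 g2
        · exact Finset.mem_of_mem_erase hb
        · omega
        · exact hb
      refine ⟨fun b => b - 1, ?_, fun b hb => hpred b (hsub b hb)⟩
      intro x hx y hy hxy
      have h1 := (hpred x (hsub x hx)).2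
      have h2 := (hpred y (hsub y hy)).2
      simp only at hxy
      omega
  constructor
  · intro a ha
    obtain ⟨f, h1, h2⟩ := key a ha
    exact (aux_inj _ _ f h1 h2).1
  · intro a ha
    obtain ⟨f, h1, h2⟩ := key a ha
    exact (aux_inj _ _ f h1 h2).2

end
end
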